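/- For every integer k ≥ 2, if R_k(x) = O(x^{1/(2k)}) as x → ∞, then the Riemann zeta function has no zeros with real part greater than 1/2. -/

import Mathlib

open Filter MeasureTheory Finset

/-- `n` is `k`-free: no `d^k` with `d > 1` divides `n`. -/
def KFree (k n : ℕ) : Prop := ∀ d : ℕ, 1 < d → ¬ d ^ k ∣ n

open Classical in
/-- `Q k x` = number of `k`-free positive integers not exceeding `x`. -/
noncomputable def Qf (k : ℕ) (x : ℝ) : ℕ :=
  ((Finset.Icc 1 ⌊x⌋₊).filter fun n => KFree k n).card

/-- `R k x = Q_k(x) - x / ζ(k)`. -/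
noncomputable def Rf (k : ℕ) (x : ℝ) : ℝ :=
  (Qf k x : ℝ) - x / (riemannZeta k).re

/-!
Write `𝟙` for the indicator of the `k`-free integers. Unique factorization `n = m * d ^ k` with `m`
`k`-free gives `L(𝟙, s) ζ(k s) = ζ(s)`, and if `R_k(x) = O(x ^ a)` then Abel summation continues
`(s - 1) L(𝟙, s)` to `a < re s`. So `ζ(k s) = 0` forces `ζ(s) = 0` there: a zero `s` of zeta with
`k a < re s` produces the zero `s / k`, and by the functional equation the zero `1 - s / k`. Since
`re s < 1`, the latter has real part exceeding `1 - 1 / k`; if this is at least `k a`, as it is for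
`a = 1 / (2 k)`, the step can be iterated. As `z ↦ 1 - z / k` is a contraction, the iterates
converge to its fixed point `k / (k + 1)`, which is then a real zero in `(0, 1)`. But zeta has none:
there `(x - 1) ζ(x) = x * ((x - 1) * ∫₁^∞ (⌊t⌋ - t) t ^ (-x - 1) dt + 1) > 0`.
-/

lemma eqOn_halfPlane_of_eqOn_halfPlane {F G : ℂ → ℂ} {a b : ℝ}
    (hF : DifferentiableOn ℂ F {s | a < s.re}) (hG : DifferentiableOn ℂ G {s | a < s.re})
    (hFG : Set.EqOn F G {s | b < s.re}) : Set.EqOn F G {s | a < s.re} := by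
  have hopen (r : ℝ) : IsOpen {s : ℂ | r < s.re} := isOpen_lt continuous_const Complex.continuous_re
  have hmem {r : ℝ} (hr : r ≤ max a b) : ((max a b + 1 : ℝ) : ℂ) ∈ {s : ℂ | r < s.re} := by
    rw [Set.mem_ofPred_eq, Complex.ofReal_re]
    linarith
  exact (hF.analyticOnNhd (hopen a)).eqOn_of_preconnected_of_eventuallyEq
    (hG.analyticOnNhd (hopen a)) (convex_halfSpace_re_gt a).isPreconnected
    (hmem (le_max_left a b))
    (Filter.eventuallyEq_of_mem ((hopen b).mem_nhds (hmem (le_max_right a b))) hFG)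

lemma tendsto_iterate_one_sub_div {𝕜 : Type*} [NormedField 𝕜] {c : 𝕜} (hc : 1 < ‖c‖) (z : 𝕜) :
    Tendsto (fun n => (fun w => 1 - w / c)^[n] z) atTop (nhds (c / (c + 1))) := by
  have hc0 : c ≠ 0 := norm_pos_iff.mp (zero_lt_one.trans hc)
  have hc1 : c + 1 ≠ 0 := fun h => by simp [eq_neg_of_add_eq_zero_left h] at hc
  have hiter (n : ℕ) : (fun w => 1 - w / c)^[n] z =
      c / (c + 1) + (z - c / (c + 1)) * (-c⁻¹) ^ n := by
    induction n with
    | zero => simp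
    | succ n ih =>
      rw [Function.iterate_succ_apply', ih, pow_succ]
      field_simp
      ring
  have hpow : Tendsto (fun n : ℕ => (-c⁻¹) ^ n) atTop (nhds 0) := by
    refine tendsto_pow_atTop_nhds_zero_of_norm_lt_one ?_
    rw [norm_neg, norm_inv]
    exact inv_lt_one_of_one_lt₀ hc
  simpa [hiter] using (hpow.const_mul (z - c / (c + 1))).const_add (c / (c + 1))

section Mellin

variable {E : Type*} [NormedAddCommGroup E] {g : ℝ → E} {a b : ℝ} {s : ℂ}

lemma locallyIntegrableOn_indicator {S T : Set ℝ} (hg : LocallyIntegrableOn g S)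
    (hT : MeasurableSet T) : LocallyIntegrableOn (T.indicator g) S := fun x hx =>
  let ⟨U, hU, hgU⟩ := hg x hx
  ⟨U, hU, hgU.indicator hT⟩

lemma indicator_Ioi_isBigO_atTop (hO : g =O[atTop] fun t : ℝ => t ^ a) :
    (Set.Ioi b).indicator g =O[atTop] fun t : ℝ => t ^ (-(-a)) := by
  rw [neg_neg]
  refine EventuallyEq.trans_isBigO ?_ hO
  filter_upwards [eventually_gt_atTop b] with t ht using Set.indicator_of_mem ht g

lemma indicator_Ioi_isBigO_nhdsGT_zero (hb : 0 < b) (r : ℝ) :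
    (Set.Ioi b).indicator g =O[nhdsWithin 0 (Set.Ioi 0)] fun t : ℝ => t ^ r := by
  have hzero : (Set.Ioi b).indicator g =ᶠ[nhdsWithin 0 (Set.Ioi 0)] fun _ => 0 := by
    filter_upwards [nhdsWithin_le_nhds (Iio_mem_nhds hb)] with t ht
    exact Set.indicator_of_notMem (not_lt.mpr (le_of_lt ht)) g
  exact hzero.trans_isBigO (Asymptotics.isBigO_zero _ _)

variable [NormedSpace ℂ E]

lemma mellinConvergent_indicator_Ioi (hg : LocallyIntegrableOn g (Set.Ioi 0))
    (hO : g =O[atTop] fun t : ℝ => t ^ a) (hb : 0 < b) (hs : s.re < -a) :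
    MellinConvergent ((Set.Ioi b).indicator g) s :=
  mellinConvergent_of_isBigO_rpow (locallyIntegrableOn_indicator hg measurableSet_Ioi)
    (indicator_Ioi_isBigO_atTop hO) hs
    (indicator_Ioi_isBigO_nhdsGT_zero hb (-(s.re - 1))) (sub_one_lt s.re)

lemma differentiableAt_mellin_indicator_Ioi (hg : LocallyIntegrableOn g (Set.Ioi 0))
    (hO : g =O[atTop] fun t : ℝ => t ^ a) (hb : 0 < b) (hs : s.re < -a) :
    DifferentiableAt ℂ (mellin ((Set.Ioi b).indicator g)) s :=
  mellin_differentiableAt_of_isBigO_rpow (locallyIntegrableOn_indicator hg measurableSet_Ioi)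
    (indicator_Ioi_isBigO_atTop hO) hs
    (indicator_Ioi_isBigO_nhdsGT_zero hb (-(s.re - 1))) (sub_one_lt s.re)

lemma mellin_indicator_Ioi (hb : 0 ≤ b) :
    mellin ((Set.Ioi b).indicator g) s = ∫ t in Set.Ioi b, (t : ℂ) ^ (s - 1) • g t := by
  have hsmul (t : ℝ) : (t : ℂ) ^ (s - 1) • (Set.Ioi b).indicator g t =
      (Set.Ioi b).indicator (fun t : ℝ => (t : ℂ) ^ (s - 1) • g t) t :=
    (Set.indicator_smul_apply _ (fun t : ℝ => (t : ℂ) ^ (s - 1)) g t).symm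
  simp only [mellin, hsmul]
  rw [setIntegral_indicator measurableSet_Ioi, Set.inter_eq_right.mpr (Set.Ioi_subset_Ioi hb)]

end Mellin

section PartialSums

/-- The error term in the approximation of the partial sums of `f` up to `t` by `c * t`. -/
noncomputable def sumRemainder (f : ℕ → ℂ) (c : ℂ) (t : ℝ) : ℂ := ∑ n ∈ Icc 1 ⌊t⌋₊, f n - c * t

/-- The continuation of `(s - 1) * LSeries f s` furnished by Abel summation when the partial sums
of `f` are close to `c * t`. The factor `s - 1` removes the pole at `1`; the remainder is truncated
to `t > 1`, as `mellin` integrates over all of `t > 0`. -/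
noncomputable def poleFreeLSeries (f : ℕ → ℂ) (c s : ℂ) : ℂ :=
  s * ((s - 1) * mellin ((Set.Ioi 1).indicator (sumRemainder f c)) (-s) + c)

variable {f : ℕ → ℂ} {c : ℂ} {a : ℝ}

lemma locallyIntegrableOn_sumRemainder : LocallyIntegrableOn (sumRemainder f c) (Set.Ioi 0) := by
  have hsum := locallyIntegrableOn_mul_sum_Icc f (m := 1) le_rfl
    ((locallyIntegrable_const (1 : ℂ)).locallyIntegrableOn _)
  have hlin : LocallyIntegrable fun t : ℝ => c * (t : ℂ) :=
    Continuous.locallyIntegrable (by fun_prop)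
  simp only [one_mul] at hsum
  exact (hsum.mono_set Set.Ioi_subset_Ici_self).sub (hlin.locallyIntegrableOn _)

lemma differentiableOn_poleFreeLSeries
    (hO : sumRemainder f c =O[atTop] fun t : ℝ => t ^ a) :
    DifferentiableOn ℂ (poleFreeLSeries f c) {s | a < s.re} := fun s hs => by
  have hmellin : DifferentiableAt ℂ
      (fun s => mellin ((Set.Ioi 1).indicator (sumRemainder f c)) (-s)) s :=
    (differentiableAt_mellin_indicator_Ioi locallyIntegrableOn_sumRemainder hO zero_lt_one
      (by simpa using hs)).comp s differentiableAt_id.neg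
  unfold poleFreeLSeries
  exact DifferentiableAt.differentiableWithinAt (by fun_prop)

lemma sum_Icc_isBigO_of_sumRemainder_isBigO (ha : a ≤ 1)
    (hO : sumRemainder f c =O[atTop] fun t : ℝ => t ^ a) :
    (fun n : ℕ => ∑ i ∈ Icc 1 n, f i) =O[atTop] fun n : ℕ => (n : ℝ) ^ (1 : ℝ) := by
  have hrem : sumRemainder f c =O[atTop] fun t : ℝ => t ^ (1 : ℝ) := hO.trans <| by
    refine Asymptotics.IsBigO.of_bound' ?_
    filter_upwards [eventually_ge_atTop 1] with t ht
    have ht0 : 0 ≤ t := zero_le_one.trans ht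
    simpa only [Real.norm_of_nonneg (Real.rpow_nonneg ht0 _)] using
      Real.rpow_le_rpow_of_exponent_le ht ha
  have hlin : (fun t : ℝ => c * (t : ℂ)) =O[atTop] fun t : ℝ => t ^ (1 : ℝ) := by
    simp only [Real.rpow_one]
    exact .const_mul_left (Complex.isBigO_ofReal_left.mpr (Asymptotics.isBigO_refl _ _)) c
  simpa [sumRemainder, Function.comp_def] using
    (hrem.add hlin).comp_tendsto tendsto_natCast_atTop_atTop

lemma integral_Ioi_one_cpow_neg {s : ℂ} (hs : 1 < s.re) :
    ∫ t in Set.Ioi (1 : ℝ), (t : ℂ) ^ (-s) = (s - 1)⁻¹ := by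
  rw [integral_Ioi_cpow_of_lt (by simpa using hs) zero_lt_one, Complex.ofReal_one,
    Complex.one_cpow, neg_add_eq_sub, ← neg_sub s 1, neg_div_neg_eq, one_div]

lemma sub_one_mul_LSeries_eq_poleFreeLSeries (ha : a ≤ 1)
    (hO : sumRemainder f c =O[atTop] fun t : ℝ => t ^ a) {s : ℂ} (hs : 1 < s.re)
    (hsum : LSeriesSummable f s) : (s - 1) * LSeries f s = poleFreeLSeries f c s := by
  have hs1 : s - 1 ≠ 0 := fun h => by simp [sub_eq_zero.mp h] at hs
  have hpow : IntegrableOn (fun t : ℝ => (t : ℂ) ^ (-s)) (Set.Ioi 1) :=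
    integrableOn_Ioi_cpow_of_lt (by simpa using hs) zero_lt_one
  have hrem : IntegrableOn (fun t : ℝ => (t : ℂ) ^ (-s - 1) • sumRemainder f c t) (Set.Ioi 1) := by
    have hconv := mellinConvergent_indicator_Ioi locallyIntegrableOn_sumRemainder hO zero_lt_one
      (s := -s) (by simpa using ha.trans_lt hs)
    exact (hconv.mono_set (Set.Ioi_subset_Ioi zero_le_one)).congr_fun
      (fun t ht => by simp only [Set.indicator_of_mem ht]) measurableSet_Ioi
  have hsplit (t : ℝ) (ht : t ∈ Set.Ioi 1) : (∑ n ∈ Icc 1 ⌊t⌋₊, f n) * (t : ℂ) ^ (-(s + 1)) =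
      (t : ℂ) ^ (-s - 1) • sumRemainder f c t + c * (t : ℂ) ^ (-s) := by
    have ht0 : (t : ℂ) ≠ 0 := Complex.ofReal_ne_zero.mpr (zero_lt_one.trans ht).ne'
    have hexp : (t : ℂ) ^ (-s) = (t : ℂ) ^ (-s - 1) * t := by
      rw [Complex.cpow_sub _ _ ht0, Complex.cpow_one, div_mul_cancel₀ _ ht0]
    rw [hexp, neg_add', smul_eq_mul, sumRemainder]
    ring
  have habel : LSeries f s =
      s * (mellin ((Set.Ioi 1).indicator (sumRemainder f c)) (-s) + c * (s - 1)⁻¹) := by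
    rw [LSeries_eq_mul_integral f zero_le_one hs hsum
        (sum_Icc_isBigO_of_sumRemainder_isBigO ha hO),
      setIntegral_congr_fun measurableSet_Ioi hsplit, integral_add hrem (hpow.const_mul c),
      integral_const_mul, integral_Ioi_one_cpow_neg hs, mellin_indicator_Ioi zero_le_one]
  rw [habel, poleFreeLSeries]
  field_simp

end PartialSums

section Zeta

lemma sub_one_mul_riemannZeta {s : ℂ} (hs : s ≠ 1) :
    (s - 1) * riemannZeta s = riemannZeta₁ s := by
  rw [riemannZeta_eq_inv_sub_mul hs, mul_inv_cancel_left₀ (sub_ne_zero.mpr hs)]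

lemma riemannZeta₁_eq_zero_iff {s : ℂ} : riemannZeta₁ s = 0 ↔ riemannZeta s = 0 := by
  rcases eq_or_ne s 1 with rfl | hs
  · simp [riemannZeta_one_ne_zero]
  · simp [← sub_one_mul_riemannZeta hs, sub_ne_zero.mpr hs]

lemma riemannZeta_one_sub_eq_zero {s : ℂ} (hs : 0 < s.re) (h : riemannZeta s = 0) :
    riemannZeta (1 - s) = 0 := by
  have hs1 : s ≠ 1 := fun h1 => riemannZeta_one_ne_zero (h1 ▸ h)
  have hneg (n : ℕ) : s ≠ -n := by
    rintro rfl
    simp [← not_le] at hs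
  rw [riemannZeta_one_sub hneg hs1, h, mul_zero]

lemma sumRemainder_one_one {t : ℝ} : sumRemainder 1 1 t = ((⌊t⌋₊ - t : ℝ) : ℂ) := by
  simp [sumRemainder]

lemma sumRemainder_one_one_isBigO :
    sumRemainder 1 1 =O[atTop] fun t : ℝ => t ^ (0 : ℝ) := by
  refine Asymptotics.IsBigO.of_bound 1 ?_
  filter_upwards [eventually_ge_atTop (0 : ℝ)] with t ht
  rw [sumRemainder_one_one, Complex.norm_real, Real.norm_eq_abs, Real.rpow_zero, norm_one, mul_one,
    abs_le]
  exact ⟨by linarith [Nat.lt_floor_add_one t], by linarith [Nat.floor_le ht]⟩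

lemma riemannZeta₁_eq_poleFreeLSeries {s : ℂ} (hs : 0 < s.re) :
    riemannZeta₁ s = poleFreeLSeries 1 1 s := by
  refine eqOn_halfPlane_of_eqOn_halfPlane differentiable_riemannZeta₁.differentiableOn
    (differentiableOn_poleFreeLSeries sumRemainder_one_one_isBigO) (b := 1) (fun z hz => ?_) hs
  have hz1 : z ≠ 1 := fun h => by simp [h] at hz
  rw [← sub_one_mul_riemannZeta hz1, ← LSeries_one_eq_riemannZeta hz,
    sub_one_mul_LSeries_eq_poleFreeLSeries zero_le_one sumRemainder_one_one_isBigO hz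
      (LSeriesSummable_one_iff.mpr hz)]

lemma exists_nonpos_eq_mellin_sumRemainder_one_one (x : ℝ) :
    ∃ y : ℝ, y ≤ 0 ∧ mellin ((Set.Ioi 1).indicator (sumRemainder 1 1)) x = y := by
  refine ⟨∫ t in Set.Ioi (1 : ℝ), t ^ (x - 1) * (⌊t⌋₊ - t), ?_, ?_⟩
  · refine setIntegral_nonpos measurableSet_Ioi fun t ht => ?_
    have ht0 : 0 ≤ t := zero_le_one.trans (le_of_lt ht)
    exact mul_nonpos_of_nonneg_of_nonpos (by positivity) (sub_nonpos.mpr (Nat.floor_le ht0))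
  · rw [mellin_indicator_Ioi zero_le_one, ← integral_complex_ofReal]
    refine setIntegral_congr_fun measurableSet_Ioi fun t ht => ?_
    have ht0 : 0 ≤ t := zero_le_one.trans (le_of_lt ht)
    simp [sumRemainder_one_one, Complex.ofReal_cpow ht0]

lemma riemannZeta_ne_zero_of_mem_Ioo {x : ℝ} (hx : x ∈ Set.Ioo (0 : ℝ) 1) :
    riemannZeta x ≠ 0 := by
  obtain ⟨y, hy, hmellin⟩ := exists_nonpos_eq_mellin_sumRemainder_one_one (-x)
  have hpos : 0 < x * ((x - 1) * y + 1) :=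
    mul_pos hx.1 (by linarith [mul_nonneg_of_nonpos_of_nonpos (sub_neg.mpr hx.2).le hy])
  have heq : riemannZeta₁ x = ((x * ((x - 1) * y + 1) : ℝ) : ℂ) := by
    rw [riemannZeta₁_eq_poleFreeLSeries (by simpa using hx.1), poleFreeLSeries,
      ← Complex.ofReal_neg, hmellin]
    push_cast
    rfl
  rw [Ne, ← riemannZeta₁_eq_zero_iff, heq, Complex.ofReal_eq_zero]
  exact hpos.ne'

end Zeta

section KFree

/-- The indicator function of the `k`-free numbers, as the coefficients of a Dirichlet series. -/
noncomputable def kfreeIndicator (k : ℕ) : ℕ → ℂ := {n | KFree k n}.indicator 1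

/-- The indicator function of the `k`-th powers, as the coefficients of a Dirichlet series. -/
noncomputable def powIndicator (k : ℕ) : ℕ → ℂ := (Set.range fun d : ℕ => d ^ k).indicator 1

lemma LSeriesSummable_indicator_one (S : Set ℕ) {s : ℂ} (hs : 1 < s.re) :
    LSeriesSummable (S.indicator 1) s :=
  LSeriesSummable_of_bounded_of_one_lt_re (m := 1)
    (fun n _ => (norm_indicator_le_norm_self 1 n).trans (by simp)) hs

lemma exists_kfree_mul_pow {k n : ℕ} (hk : k ≠ 0) (hn : n ≠ 0) :
    ∃ m d : ℕ, KFree k m ∧ m * d ^ k = n := by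
  induction n using Nat.strong_induction_on with
  | _ n ih =>
    by_cases hfree : KFree k n
    · exact ⟨n, 1, hfree, by simp⟩
    · simp only [KFree, not_forall, not_not] at hfree
      obtain ⟨e, he, q, rfl⟩ := hfree
      have hq : q ≠ 0 := right_ne_zero_of_mul hn
      have hlt : q < e ^ k * q :=
        lt_mul_of_one_lt_left (Nat.pos_of_ne_zero hq) (Nat.one_lt_pow hk he)
      obtain ⟨m, d, hm, rfl⟩ := ih q hlt hq
      exact ⟨m, e * d, hm, by rw [mul_pow]; ring⟩

namespace KFree

variable {k m m' d e : ℕ}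

lemma dvd_of_mul_pow_eq (hm' : KFree k m') (hd : d ≠ 0) (h : m * d ^ k = m' * e ^ k) : d ∣ e := by
  obtain ⟨g, d', e', hg, hcop, rfl, rfl⟩ :=
    Nat.exists_coprime' (Nat.gcd_pos_of_pos_left e (Nat.pos_of_ne_zero hd))
  have hcancel : m * d' ^ k = m' * e' ^ k := by
    refine Nat.eq_of_mul_eq_mul_right (pow_pos hg k) ?_
    rw [mul_assoc, mul_assoc, ← mul_pow, ← mul_pow, h]
  have hdvd : d' ^ k ∣ m' :=
    (hcop.pow k k).dvd_of_dvd_mul_right (hcancel ▸ Dvd.intro_left m rfl)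
  have hle : d' ≤ 1 := not_lt.mp fun hlt => hm' d' hlt hdvd
  have hone : d' = 1 := le_antisymm hle (Nat.pos_of_ne_zero (left_ne_zero_of_mul hd))
  rw [hone, one_mul]
  exact Dvd.intro_left e' rfl

lemma eq_of_mul_pow_eq (hm : KFree k m) (hm' : KFree k m') (hd : d ≠ 0) (he : e ≠ 0)
    (h : m * d ^ k = m' * e ^ k) : m = m' ∧ d = e := by
  obtain rfl : d = e :=
    Nat.dvd_antisymm (hm'.dvd_of_mul_pow_eq hd h) (hm.dvd_of_mul_pow_eq he h.symm)
  exact ⟨Nat.eq_of_mul_eq_mul_right (pow_pos (Nat.pos_of_ne_zero hd) k) h, rfl⟩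

end KFree

open scoped LSeries.notation in
lemma kfreeIndicator_convolution_powIndicator {k n : ℕ} (hk : k ≠ 0) (hn : n ≠ 0) :
    (kfreeIndicator k ⍟ powIndicator k) n = 1 := by
  obtain ⟨m, d, hm, rfl⟩ := exists_kfree_mul_pow hk hn
  have hbase {m e : ℕ} (h : m * e ^ k ≠ 0) : e ≠ 0 := by
    rintro rfl
    simp [hk] at h
  have hunique (p : ℕ × ℕ) (hp : p ∈ (m * d ^ k).divisorsAntidiagonal) (hne : p ≠ (m, d ^ k)) :
      kfreeIndicator k p.1 * powIndicator k p.2 = 0 := by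
    contrapose! hne
    have hfree : KFree k p.1 := Set.mem_of_indicator_ne_zero (left_ne_zero_of_mul hne)
    obtain ⟨e, he⟩ : p.2 ∈ Set.range fun d : ℕ => d ^ k :=
      Set.mem_of_indicator_ne_zero (right_ne_zero_of_mul hne)
    have hmul : p.1 * e ^ k = m * d ^ k := by
      simpa only [← he] using (Nat.mem_divisorsAntidiagonal.mp hp).1
    obtain ⟨hfst, rfl⟩ := hfree.eq_of_mul_pow_eq hm (hbase (hmul ▸ hn)) (hbase hn) hmul
    exact Prod.ext hfst he.symm
  simp only [LSeries.convolution_def]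
  rw [Finset.sum_eq_single_of_mem (m, d ^ k) (Nat.mem_divisorsAntidiagonal.mpr ⟨rfl, hn⟩) hunique]
  simp [kfreeIndicator, powIndicator, hm]

lemma LSeries_powIndicator {k : ℕ} {s : ℂ} (hs : 1 < (k * s).re) :
    LSeries (powIndicator k) s = riemannZeta (k * s) := by
  have hk : k ≠ 0 := by
    rintro rfl
    norm_num at hs
  have hsupp : Function.support (LSeries.term (powIndicator k) s) ⊆
      Set.range fun d : ℕ => d ^ k := fun n hn => by
    contrapose! hn
    simp [LSeries.term, powIndicator, Set.indicator_of_notMem hn]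
  rw [← LSeries_one_eq_riemannZeta hs, LSeries, LSeries,
    ← (Nat.pow_left_injective hk).tsum_eq hsupp]
  refine tsum_congr fun d => ?_
  rcases eq_or_ne d 0 with rfl | hd
  · simp [hk]
  · rw [LSeries.term_of_ne_zero (pow_ne_zero k hd), LSeries.term_of_ne_zero hd,
      Complex.natCast_cpow_natCast_mul]
    simp [powIndicator]

lemma one_lt_re_natCast_mul {k : ℕ} (hk : k ≠ 0) {s : ℂ} (hs : 1 < s.re) : 1 < (k * s).re := by
  have hk1 : (1 : ℝ) ≤ k := Nat.one_le_cast.mpr (Nat.one_le_iff_ne_zero.mpr hk)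
  rw [← Complex.ofReal_natCast, Complex.re_ofReal_mul]
  exact hs.trans_le (le_mul_of_one_le_left (by linarith) hk1)

lemma LSeries_kfreeIndicator_mul_riemannZeta {k : ℕ} (hk : k ≠ 0) {s : ℂ} (hs : 1 < s.re) :
    LSeries (kfreeIndicator k) s * riemannZeta (k * s) = riemannZeta s := by
  rw [← LSeries_powIndicator (one_lt_re_natCast_mul hk hs), ← LSeries_one_eq_riemannZeta hs,
    kfreeIndicator, powIndicator, ← LSeries_convolution' (LSeriesSummable_indicator_one _ hs)
      (LSeriesSummable_indicator_one _ hs)]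
  exact LSeries_congr (fun hn => kfreeIndicator_convolution_powIndicator hk hn) s

lemma sumRemainder_kfreeIndicator (k : ℕ) (x : ℝ) :
    sumRemainder (kfreeIndicator k) ((riemannZeta k).re : ℂ)⁻¹ x = Rf k x := by
  classical
  have hsum : ∑ n ∈ Icc 1 ⌊x⌋₊, kfreeIndicator k n = Qf k x := by
    simp [kfreeIndicator, Qf, Set.indicator_apply]
  rw [sumRemainder, hsum, Rf]
  push_cast
  ring

end KFree

section ZeroReflection

variable {k : ℕ} {a : ℝ}

lemma poleFreeLSeries_kfreeIndicator_mul (hk : k ≠ 0) (ha : a ≤ 1) {c : ℂ}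
    (hO : sumRemainder (kfreeIndicator k) c =O[atTop] fun t : ℝ => t ^ a)
    {s : ℂ} (hs : a < s.re) :
    poleFreeLSeries (kfreeIndicator k) c s * riemannZeta₁ (k * s) =
      riemannZeta₁ s * (k * s - 1) := by
  refine eqOn_halfPlane_of_eqOn_halfPlane (b := 1)
    (F := fun s => poleFreeLSeries (kfreeIndicator k) c s * riemannZeta₁ (k * s))
    (G := fun s => riemannZeta₁ s * (k * s - 1))
    ((differentiableOn_poleFreeLSeries hO).mul (by fun_prop)) (by fun_prop) (fun z hz => ?_) hs
  have hz1 : z ≠ 1 := fun h => by simp [h] at hz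
  have hkz1 : k * z ≠ 1 := fun h => by
    simpa only [h, Complex.one_re, lt_irrefl] using one_lt_re_natCast_mul hk hz
  simp only
  rw [← sub_one_mul_LSeries_eq_poleFreeLSeries ha hO hz (LSeriesSummable_indicator_one _ hz),
    ← sub_one_mul_riemannZeta hz1, ← sub_one_mul_riemannZeta hkz1,
    ← LSeries_kfreeIndicator_mul_riemannZeta hk hz]
  ring

lemma riemannZeta_div_eq_zero (hk : k ≠ 0) (ha : a ≤ 1)
    (hR : Rf k =O[atTop] fun x : ℝ => x ^ a) {s : ℂ} (hs : k * a < s.re)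
    (hs0 : riemannZeta s = 0) : riemannZeta (s / k) = 0 := by
  have hs1 : s ≠ 1 := fun h => riemannZeta_one_ne_zero (h ▸ hs0)
  have hk0 : (0 : ℝ) < k := Nat.cast_pos.mpr (Nat.pos_of_ne_zero hk)
  have hre : a < (s / k).re := by
    rwa [Complex.div_natCast_re, lt_div_iff₀' hk0]
  have hO : sumRemainder (kfreeIndicator k) ((riemannZeta k).re : ℂ)⁻¹ =O[atTop]
      fun t : ℝ => t ^ a := by
    rw [funext (sumRemainder_kfreeIndicator k)]
    exact Complex.isBigO_ofReal_left.mpr hR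
  have hprod := poleFreeLSeries_kfreeIndicator_mul hk ha hO hre
  rw [mul_div_cancel₀ s (Nat.cast_ne_zero.mpr hk), riemannZeta₁_eq_zero_iff.mpr hs0, mul_zero,
    eq_comm, mul_eq_zero, or_iff_left (sub_ne_zero.mpr hs1)] at hprod
  exact riemannZeta₁_eq_zero_iff.mp hprod

lemma mapsTo_one_sub_div_zeros (hk : k ≠ 0) (ha : 0 ≤ a) (hka : k * a ≤ 1 - 1 / k)
    (hR : Rf k =O[atTop] fun x : ℝ => x ^ a) :
    Set.MapsTo (fun s : ℂ => 1 - s / k) {s | k * a < s.re ∧ riemannZeta s = 0}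
      {s | k * a < s.re ∧ riemannZeta s = 0} := by
  rintro s ⟨hs, hs0⟩
  have hk1 : (1 : ℝ) ≤ k := Nat.one_le_cast.mpr (Nat.one_le_iff_ne_zero.mpr hk)
  have hk0 : (0 : ℝ) < k := by linarith
  have hre_lt : s.re < 1 := not_le.mp fun h => riemannZeta_ne_zero_of_one_le_re h hs0
  have hre_pos : 0 < (s / k).re := by
    rw [Complex.div_natCast_re]
    exact div_pos ((mul_nonneg hk0.le ha).trans_lt hs) hk0
  have ha1 : a ≤ 1 :=
    (le_mul_of_one_le_left ha hk1).trans (hka.trans (sub_le_self 1 (by positivity)))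
  refine ⟨?_, riemannZeta_one_sub_eq_zero hre_pos (riemannZeta_div_eq_zero hk ha1 hR hs hs0)⟩
  calc k * a ≤ 1 - 1 / k := hka
    _ < 1 - s.re / k := by gcongr
    _ = (1 - s / k : ℂ).re := by simp

end ZeroReflection

theorem Rk_bigO_implies_no_zeros_general (k : ℕ) (hk : 2 ≤ k) {a : ℝ} (ha : 0 ≤ a)
    (hka : k * a ≤ 1 - 1 / k) (h : (fun x : ℝ => Rf k x) =O[atTop] fun x : ℝ => x ^ a) :
    ∀ s : ℂ, k * a < s.re → riemannZeta s ≠ 0 := by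
  intro s hs hs0
  have hmaps := mapsTo_one_sub_div_zeros (by omega) ha hka h
  have hlim : Tendsto (fun n => (fun z : ℂ => 1 - z / k)^[n] s) atTop (nhds (k / (k + 1))) :=
    tendsto_iterate_one_sub_div (by simpa using Nat.lt_of_succ_le hk) s
  have hzero : riemannZeta (k / (k + 1)) = 0 :=
    isClosed_riemannZetaZeros.mem_of_tendsto hlim
      (.of_forall fun n => (hmaps.iterate n ⟨hs, hs0⟩).2)
  have hfix : (k / (k + 1) : ℝ) ∈ Set.Ioo (0 : ℝ) 1 :=
    ⟨by positivity, (div_lt_one (by positivity)).mpr (lt_add_one _)⟩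
  exact riemannZeta_ne_zero_of_mem_Ioo hfix (by simpa using hzero)

theorem Rk_bigO_implies_no_zeros (k : ℕ) (hk : 2 ≤ k)
    (h : (fun x : ℝ => Rf k x) =O[atTop] fun x : ℝ => x ^ ((1 : ℝ) / (2 * k))) :
    ∀ s : ℂ, 1 / 2 < s.re → riemannZeta s ≠ 0 := by
  have hk2 : (2 : ℝ) ≤ k := Nat.ofNat_le_cast.mpr hk
  have hhalf : (k : ℝ) * (1 / (2 * k)) = 1 / 2 := by field_simp
  have hle : 1 / (k : ℝ) ≤ 1 / 2 := one_div_le_one_div_of_le two_pos hk2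
  simpa only [hhalf] using
    Rk_bigO_implies_no_zeros_general k hk (by positivity) (by linarith) h
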